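/- arXiv:1001.0287 — 2 statements merged into one kernel-verified Lean document; each statement's English description precedes it below -/
import Mathlib

section
/- Let H be a triangle-tree-structure with exactly t triangles, and let G be a connected graph obtained from H by attaching pendant edges, i.e., G consists of H together with some new vertices of degree one, each adjacent to exactly one vertex of H. Then rc(L(G)) ≤ t + 1. -/
open SimpleGraph

/-- An edge coloring `c` (colors on `Sym2 V`, only values on edges matter) makes `G`
rainbow connected if any two vertices are joined by a path no two of whose edges
get the same color. -/
def SimpleGraph.RainbowConnected {V α : Type*} (G : SimpleGraph V) (c : Sym2 V → α) : Prop :=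
  ∀ u v : V, ∃ p : G.Walk u v, p.IsPath ∧ (p.edges.map c).Nodup

/-- The rainbow connection number of `G`: the least `k` such that some edge coloring
with at most `k` colors makes `G` rainbow connected. -/
noncomputable def SimpleGraph.rc {V : Type*} (G : SimpleGraph V) : ℕ :=
  sInf {k | ∃ c : Sym2 V → ℕ, (∀ e ∈ G.edgeSet, c e < k) ∧ G.RainbowConnected c}

/-- A triangle of `G`: three mutually adjacent vertices. -/
def SimpleGraph.IsTriangle {V : Type*} (G : SimpleGraph V) (T : Finset V) : Prop :=
  T.card = 3 ∧ ∀ u ∈ T, ∀ v ∈ T, u ≠ v → G.Adj u v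

/-- The set of edges of a triangle (or clique) with vertex set `T`. -/
def triangleEdges {V : Type*} (T : Finset V) : Set (Sym2 V) :=
  {e | ∃ u ∈ T, ∃ v ∈ T, u ≠ v ∧ e = s(u, v)}

/-- The number of inner vertices (vertices of degree at least two) of `G`. -/
noncomputable def innerCount {V : Type*} (G : SimpleGraph V) : ℕ :=
  {v : V | 2 ≤ Nat.card (G.neighborSet v)}.ncard

/-- A graph is a triangle-forest-structure (i.e. every block is a triangle, so every
connected component is a triangle-tree-structure) if and only if every edge lies in a
triangle and every cycle has length 3. -/
def SimpleGraph.IsTriangleForest {V : Type*} (H : SimpleGraph V) : Prop :=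
  (∀ e ∈ H.edgeSet, ∃ T : Finset V, H.IsTriangle T ∧ e ∈ triangleEdges T) ∧
  ∀ (v : V) (p : H.Walk v v), p.IsCycle → p.length = 3

/-!
Fix a root of the triangle tree `H`. Every other vertex `x` has exactly one neighbor closer to the
root, its parent, and exactly one neighbor at the same distance, its sibling; together the three
form a triangle, the family of `x`, and each triangle is the family of exactly two vertices. The
line graph is a union of cliques, one for the edges at each vertex. Color the clique at `x` with
the family of `x`, except that at one chosen member of each sibling pair, and at the root, the
pairs of edges avoiding the parent edge get one extra color. Climbing towards the root along parent
edges then uses a new color at every step, and two climbs are joined as soon as they reach a common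
vertex or a pair of siblings; in the latter case one crosses the sibling edge, using the color of
the shared family once and the extra color once.
-/

section RainbowReachable

variable {V α : Type*} {G : SimpleGraph V} {c : Sym2 V → α} {S S' : Set α} {u v w : V}

/-- `u` and `v` are joined by a walk whose edges have pairwise distinct colors, all in `S`. Such a
walk need not be a path, but bypassing its loops only removes edges. -/
def RainbowReachable (G : SimpleGraph V) (c : Sym2 V → α) (S : Set α) (u v : V) : Prop :=
  ∃ p : G.Walk u v, (p.edges.map c).Nodup ∧ ∀ e ∈ p.edges, c e ∈ S

namespace RainbowReachable

theorem refl (G : SimpleGraph V) (c : Sym2 V → α) (S : Set α) (v : V) :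
    RainbowReachable G c S v v :=
  ⟨.nil, by simp, by simp⟩

theorem mono (h : RainbowReachable G c S u v) (hS : S ⊆ S') : RainbowReachable G c S' u v :=
  let ⟨p, hnodup, hmem⟩ := h
  ⟨p, hnodup, fun e he ↦ hS (hmem e he)⟩

theorem symm (h : RainbowReachable G c S u v) : RainbowReachable G c S v u := by
  obtain ⟨p, hnodup, hmem⟩ := h
  refine ⟨p.reverse, ?_, ?_⟩
  · simpa only [Walk.edges_reverse, List.map_reverse, List.nodup_reverse] using hnodup
  · simpa only [Walk.edges_reverse, List.mem_reverse] using hmem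

theorem cons (huv : G.Adj u v) (h : RainbowReachable G c S v w) (hc : c s(u, v) ∉ S) :
    RainbowReachable G c (insert (c s(u, v)) S) u w := by
  obtain ⟨p, hnodup, hmem⟩ := h
  refine ⟨.cons huv p, ?_, ?_⟩
  · rw [Walk.edges_cons, List.map_cons, List.nodup_cons, List.mem_map]
    exact ⟨fun ⟨e, he, hce⟩ ↦ hc (hce ▸ hmem e he), hnodup⟩
  · rw [Walk.edges_cons, List.forall_mem_cons]
    exact ⟨.inl rfl, fun e he ↦ .inr (hmem e he)⟩

theorem of_adj (huv : G.Adj u v) (hc : c s(u, v) ∈ S) : RainbowReachable G c S u v :=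
  (cons huv (refl G c ∅ v) (Set.notMem_empty _)).mono
    (Set.insert_subset hc (Set.empty_subset S))

theorem exists_isPath (h : RainbowReachable G c S u v) :
    ∃ p : G.Walk u v, p.IsPath ∧ (p.edges.map c).Nodup := by
  classical
  obtain ⟨p, hnodup, -⟩ := h
  refine ⟨p.bypass, p.bypass_isPath, p.bypass_isPath.isTrail.edges_nodup.map_on ?_⟩
  exact fun e he e' he' ↦ List.inj_on_of_nodup_map hnodup
    (p.edges_bypass_subset_edges he) (p.edges_bypass_subset_edges he')

end RainbowReachable

theorem rc_le_ncard_of_rainbowConnected (hS : S.Finite) (hc : ∀ e ∈ G.edgeSet, c e ∈ S)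
    (h : G.RainbowConnected c) : G.rc ≤ S.ncard := by
  have hcard : S.encard = (Set.Iio S.ncard).encard := by
    rw [← hS.cast_ncard_eq, ← (Set.finite_Iio S.ncard).cast_ncard_eq]
    simp
  obtain ⟨φ, hφ⟩ := hS.exists_bijOn_of_encard_eq hcard
  refine Nat.sInf_le ⟨φ ∘ c, fun e he ↦ hφ.mapsTo (hc e he), fun u v ↦ ?_⟩
  obtain ⟨p, hpath, hnodup⟩ := h u v
  have hmem : ∀ a ∈ p.edges.map c, a ∈ S :=
    List.forall_mem_map.2 fun e he ↦ hc e (p.edges_subset_edgeSet he)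
  refine ⟨p, hpath, ?_⟩
  rw [← List.map_map]
  exact hnodup.map_on fun a ha b hb ↦ hφ.injOn (hmem a ha) (hmem b hb)

end RainbowReachable

section TriangleForest

variable {W : Type*} {H : SimpleGraph W} {r u v w : W}

theorem isTriangle_iff_isNClique {T : Finset W} : H.IsTriangle T ↔ H.IsNClique 3 T := by
  rw [isNClique_iff, and_comm]
  exact Iff.rfl

theorem exists_adj_adj_of_adj (hH : H.IsTriangleForest) (huv : H.Adj u v) :
    ∃ w, H.Adj u w ∧ H.Adj v w := by
  classical
  obtain ⟨T, hT, a, ha, b, hb, -, heq⟩ := hH.1 s(u, v) huv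
  obtain ⟨x, y, z, hxy, hxz, hyz, rfl⟩ := is3Clique_iff.1 (isTriangle_iff_isNClique.1 hT)
  have huv' := huv.ne
  simp only [Finset.mem_insert, Finset.mem_singleton] at ha hb
  grind [Sym2.eq_iff, SimpleGraph.adj_comm]

theorem length_le_two_of_isPath_of_adj (hH : H.IsTriangleForest) {p : H.Walk u v} (hp : p.IsPath)
    (huv : H.Adj u v) : p.length ≤ 2 := by
  by_cases hmem : s(u, v) ∈ p.edges
  · exact (hp.length_eq_one_of_mem_edges hmem).trans_le one_le_two
  · have hcycle : (Walk.cons huv.symm p).IsCycle :=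
      (Walk.cons_isCycle_iff p _).2 ⟨hp, Sym2.eq_swap ▸ hmem⟩
    have := hH.2 v _ hcycle
    rw [Walk.length_cons] at this
    omega

theorem exists_adj_dist_eq_add_one (hconn : H.Connected) (hv : v ≠ r) :
    ∃ p, H.Adj v p ∧ H.dist r v = H.dist r p + 1 := by
  obtain ⟨p, hp⟩ := hconn.exists_walk_length_eq_dist v r
  cases p with
  | nil => exact absurd rfl hv
  | @cons _ x _ hvx q =>
    have hq := H.dist_le q
    have hstep := hconn.dist_triangle (u := v) (v := x) (w := r)
    rw [dist_eq_one_iff_adj.2 hvx] at hstep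
    rw [Walk.length_cons] at hp
    exact ⟨x, hvx, by rw [H.dist_comm, H.dist_comm (u := r)]; omega⟩

theorem exists_isPath_forall_dist_lt (hconn : H.Connected) {n : ℕ} (hu : H.dist r u < n)
    (hv : H.dist r v < n) : ∃ p : H.Walk u v, p.IsPath ∧ ∀ x ∈ p.support, H.dist r x < n := by
  classical
  obtain ⟨p, hp⟩ := hconn.exists_walk_length_eq_dist r u
  obtain ⟨q, hq⟩ := hconn.exists_walk_length_eq_dist r v
  refine ⟨(p.reverse.append q).bypass, Walk.bypass_isPath _, fun x hx ↦ ?_⟩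
  have hx := Walk.support_bypass_subset_support _ hx
  rw [Walk.mem_support_append_iff, Walk.support_reverse, List.mem_reverse] at hx
  rcases hx with hx | hx
  · exact ((H.dist_le _).trans (p.length_takeUntil_le_length hx)).trans_lt (hp ▸ hu)
  · exact ((H.dist_le _).trans (q.length_takeUntil_le_length hx)).trans_lt (hq ▸ hv)

theorem exists_isPath_two_le_length (hconn : H.Connected) (huv : u ≠ v)
    (hdist : H.dist r u = H.dist r v) :
    ∃ p : H.Walk u v, p.IsPath ∧ 2 ≤ p.length ∧
      ∀ x ∈ p.support, x = u ∨ x = v ∨ H.dist r x < H.dist r u := by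
  have hur : u ≠ r := by
    rintro rfl
    rw [dist_self, eq_comm, hconn.dist_eq_zero_iff] at hdist
    exact huv hdist
  have hvr : v ≠ r := by
    rintro rfl
    rw [dist_self, hconn.dist_eq_zero_iff] at hdist
    exact huv hdist.symm
  obtain ⟨a, hua, hda⟩ := exists_adj_dist_eq_add_one hconn hur
  obtain ⟨b, hvb, hdb⟩ := exists_adj_dist_eq_add_one hconn hvr
  obtain ⟨p, hp, hlt⟩ := exists_isPath_forall_dist_lt hconn (r := r) (u := a) (v := b)
    (n := H.dist r u) (by omega) (by omega)
  have hu : u ∉ p.support := fun h ↦ (hlt u h).false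
  have hv : v ∉ p.support := fun h ↦ (hdist ▸ hlt v h).false
  refine ⟨.cons hua (p.concat hvb.symm), ?_, ?_, ?_⟩
  · refine (hp.concat hv _).cons ?_
    simp [Walk.support_concat, hu, huv]
  · simp
  · intro x hx
    simp only [Walk.support_cons, Walk.support_concat, List.mem_cons, List.mem_append,
      List.not_mem_nil, or_false] at hx
    rcases hx with rfl | hx | rfl
    exacts [.inl rfl, .inr (.inr (hlt x hx)), .inr (.inl rfl)]

theorem eq_of_adj_of_dist_lt (hconn : H.Connected) (hH : H.IsTriangleForest) (hvu : H.Adj v u)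
    (hvw : H.Adj v w) (hu : H.dist r u < H.dist r v) (hw : H.dist r w < H.dist r v) : u = w := by
  by_contra huw
  have hdu := hvu.symm.diff_dist_adj (u := r)
  have hdw := hvw.symm.diff_dist_adj (u := r)
  obtain ⟨p, hp, hlen, hsupp⟩ := exists_isPath_two_le_length (r := r) hconn huw (by omega)
  have hv : v ∉ p.support := by
    intro hv
    rcases hsupp v hv with rfl | rfl | hlt
    exacts [hvu.ne rfl, hvw.ne rfl, by omega]
  have := length_le_two_of_isPath_of_adj hH (hp.concat hv hvw.symm) hvu.symm
  rw [Walk.length_concat] at this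
  omega

theorem exists_adj_adj_dist_lt (hconn : H.Connected) (hH : H.IsTriangleForest) (huv : H.Adj u v)
    (hdist : H.dist r u = H.dist r v) :
    ∃ x, H.Adj u x ∧ H.Adj v x ∧ H.dist r x < H.dist r u := by
  obtain ⟨p, hp, hlen, hsupp⟩ := exists_isPath_two_le_length hconn huv.ne hdist
  obtain ⟨x, hux, hxv, hx⟩ : ∃ x, H.Adj u x ∧ H.Adj x v ∧ x ∈ p.support := by
    match p, hlen.antisymm' (length_le_two_of_isPath_of_adj hH hp huv) with
    | .cons hux (.cons hxv .nil), _ => exact ⟨_, hux, hxv, by simp⟩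
  rcases hsupp x hx with rfl | rfl | hlt
  exacts [absurd rfl hux.ne, absurd rfl hxv.ne, ⟨x, hux, hxv.symm, hlt⟩]

theorem eq_of_adj_of_dist_eq (hconn : H.Connected) (hH : H.IsTriangleForest) (hvu : H.Adj v u)
    (hvw : H.Adj v w) (hu : H.dist r u = H.dist r v) (hw : H.dist r w = H.dist r v) : u = w := by
  by_contra huw
  obtain ⟨x, hvx, hux, hx⟩ := exists_adj_adj_dist_lt hconn hH hvu hu.symm
  obtain ⟨y, hvy, hwy, hy⟩ := exists_adj_adj_dist_lt hconn hH hvw hw.symm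
  obtain rfl := eq_of_adj_of_dist_lt hconn hH hvx hvy hx hy
  have hpath : (Walk.cons hvu.symm (.cons hvw (.cons hwy .nil))).IsPath := by
    simp only [Walk.isPath_def, Walk.support_cons, Walk.support_nil]
    grind [hvu.ne, hvx.ne, hux.ne, hwy.ne, hvw.ne]
  have := length_le_two_of_isPath_of_adj hH hpath hux
  simp at this

theorem existsUnique_adj_dist_lt (hconn : H.Connected) (hH : H.IsTriangleForest) (hv : v ≠ r) :
    ∃! p, H.Adj v p ∧ H.dist r p < H.dist r v := by
  obtain ⟨p, hvp, hp⟩ := exists_adj_dist_eq_add_one hconn hv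
  exact ⟨p, ⟨hvp, by omega⟩,
    fun q hq ↦ eq_of_adj_of_dist_lt hconn hH hq.1 hvp hq.2 (by omega)⟩

theorem existsUnique_adj_dist_eq (hconn : H.Connected) (hH : H.IsTriangleForest) (hv : v ≠ r) :
    ∃! s, H.Adj v s ∧ H.dist r s = H.dist r v := by
  obtain ⟨p, hvp, hp⟩ := exists_adj_dist_eq_add_one hconn hv
  obtain ⟨s, hvs, hps⟩ := exists_adj_adj_of_adj hH hvp
  have hs : H.dist r s = H.dist r v := by
    have hds := hps.diff_dist_adj (u := r)
    by_contra hne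
    exact hps.ne (eq_of_adj_of_dist_lt hconn hH hvp hvs (r := r) (by omega) (by omega))
  exact ⟨s, ⟨hvs, hs⟩, fun t ht ↦ eq_of_adj_of_dist_eq hconn hH ht.1 hvs ht.2 hs⟩

end TriangleForest

section CommonVertex

variable {V W : Type*} [Nonempty W] {G : SimpleGraph V} {f : W → V} {e e' : G.edgeSet} {x : W}

/-- The vertex, as an element of the index type `W`, shared by the two ends of an edge of the line
graph; arbitrary if they share none in the range of `f`. -/
noncomputable def commonVertex (f : W → V) (z : Sym2 G.edgeSet) : W :=
  Classical.epsilon fun x ↦ ∀ e ∈ z, f x ∈ (e : Sym2 V)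

theorem commonVertex_mk (hf : Function.Injective f) (hne : e ≠ e') (he : f x ∈ (e : Sym2 V))
    (he' : f x ∈ (e' : Sym2 V)) : commonVertex f s(e, e') = x := by
  have hx : ∀ d ∈ s(e, e'), f x ∈ (d : Sym2 V) := Sym2.ball.2 ⟨he, he'⟩
  have hspec := Sym2.ball.1
    (Classical.epsilon_spec (p := fun x ↦ ∀ d ∈ s(e, e'), f x ∈ (d : Sym2 V)) ⟨x, hx⟩)
  by_contra hcx
  have hfcx := hf.ne hcx
  exact hne (Subtype.ext (((Sym2.mem_and_mem_iff hfcx).1 ⟨hspec.1, he⟩).trans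
    ((Sym2.mem_and_mem_iff hfcx).1 ⟨hspec.2, he'⟩).symm))

end CommonVertex

/-- A rooted spanning triangle tree of `H`: a root, and for every other vertex a parent closer to
the root and a sibling at the same depth, such that siblings come in pairs and share their parent.
By convention the root is its own parent and sibling. -/
structure TriangleRooting {W : Type*} (H : SimpleGraph W) where
  /-- The root. -/
  root : W
  /-- The neighbor of a vertex on the way to the root. -/
  parent : W → W
  /-- The third vertex of the triangle through a vertex and its parent. -/
  sibling : W → W
  /-- A height function, such as the distance from the root. -/
  depth : W → ℕ
  parent_root : parent root = root
  sibling_root : sibling root = root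
  depth_root : depth root = 0
  adj_parent {x : W} : x ≠ root → H.Adj x (parent x)
  adj_sibling {x : W} : x ≠ root → H.Adj x (sibling x)
  depth_parent {x : W} : x ≠ root → depth (parent x) < depth x
  depth_sibling (x : W) : depth (sibling x) = depth x
  sibling_sibling (x : W) : sibling (sibling x) = x
  parent_sibling (x : W) : parent (sibling x) = parent x

theorem nonempty_triangleRooting {W : Type*} {H : SimpleGraph W} (hconn : H.Connected)
    (hH : H.IsTriangleForest) : Nonempty (TriangleRooting H) := by
  classical
  obtain ⟨r⟩ := hconn.nonempty
  choose! par hpar hpar_unique using fun v (hv : v ≠ r) ↦ existsUnique_adj_dist_lt hconn hH hv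
  choose! sib hsib hsib_unique using fun v (hv : v ≠ r) ↦ existsUnique_adj_dist_eq hconn hH hv
  have sib_ne {v : W} (hv : v ≠ r) : sib v ≠ r := by
    intro h
    have hdist := (hsib v hv).2
    rw [h, dist_self, eq_comm, hconn.dist_eq_zero_iff] at hdist
    exact hv hdist.symm
  have sib_sib {v : W} (hv : v ≠ r) : sib (sib v) = v :=
    (hsib_unique _ (sib_ne hv) v ⟨(hsib v hv).1.symm, (hsib v hv).2.symm⟩).symm
  have par_sib {v : W} (hv : v ≠ r) : par (sib v) = par v := by
    obtain ⟨hadj, hdist⟩ := hsib v hv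
    obtain ⟨x, hvx, hsx, hx⟩ := exists_adj_adj_dist_lt hconn hH hadj hdist.symm
    rw [← hpar_unique v hv x ⟨hvx, hx⟩, ← hpar_unique _ (sib_ne hv) x ⟨hsx, hdist ▸ hx⟩]
  exact ⟨{
    root := r
    parent := Function.update par r r
    sibling := Function.update sib r r
    depth := H.dist r
    parent_root := Function.update_self ..
    sibling_root := Function.update_self ..
    depth_root := dist_self
    adj_parent := fun hx ↦ by simpa [hx] using (hpar _ hx).1
    adj_sibling := fun hx ↦ by simpa [hx] using (hsib _ hx).1
    depth_parent := fun hx ↦ by simpa [hx] using (hpar _ hx).2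
    depth_sibling := fun x ↦ by
      obtain rfl | hx := eq_or_ne x r
      · simp
      · simpa [hx] using (hsib _ hx).2
    sibling_sibling := fun x ↦ by
      obtain rfl | hx := eq_or_ne x r
      · simp
      · simp [hx, sib_ne hx, sib_sib hx]
    parent_sibling := fun x ↦ by
      obtain rfl | hx := eq_or_ne x r
      · simp
      · simp [hx, sib_ne hx, par_sib hx] }⟩

namespace TriangleRooting

section Family

variable {W : Type*} {H : SimpleGraph W} (R : TriangleRooting H) {x y w : W}

theorem depth_parent_le (x : W) : R.depth (R.parent x) ≤ R.depth x := by
  obtain rfl | hx := eq_or_ne x R.root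
  · rw [R.parent_root]
  · exact (R.depth_parent hx).le

theorem sibling_ne_root (hx : x ≠ R.root) : R.sibling x ≠ R.root := by
  intro h
  rw [← R.sibling_sibling x, h, R.sibling_root] at hx
  exact hx rfl

open Classical in
/-- The triangle formed by `x`, its sibling and its parent; for the root it degenerates to
`{root}`. The families serve as colors, that of the root being the color that belongs to no
triangle. -/
noncomputable def family (x : W) : Finset W :=
  {x, R.sibling x, R.parent x}

theorem mem_family : w ∈ R.family x ↔ w = x ∨ w = R.sibling x ∨ w = R.parent x := by
  simp only [family, Finset.mem_insert, Finset.mem_singleton]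

theorem family_root : R.family R.root = {R.root} := by
  simp [family, R.sibling_root, R.parent_root]

theorem family_sibling (x : W) : R.family (R.sibling x) = R.family x := by
  classical
  rw [family, family, R.sibling_sibling, R.parent_sibling, Finset.insert_comm]

theorem isTriangle_family (hx : x ≠ R.root) : H.IsTriangle (R.family x) := by
  classical
  have hsib := R.adj_parent (R.sibling_ne_root hx)
  rw [R.parent_sibling] at hsib
  rw [isTriangle_iff_isNClique, family, is3Clique_triple_iff]
  exact ⟨R.adj_sibling hx, R.adj_parent hx, hsib⟩

theorem depth_le_of_mem_family (hw : w ∈ R.family x) : R.depth w ≤ R.depth x := by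
  rcases R.mem_family.1 hw with rfl | rfl | rfl
  exacts [le_rfl, (R.depth_sibling x).le, R.depth_parent_le x]

theorem eq_or_eq_sibling_of_family_eq (h : R.family x = R.family y) :
    x = y ∨ x = R.sibling y := by
  have hxy : x ∈ R.family y := h ▸ R.mem_family.2 (.inl rfl)
  have hyx : y ∈ R.family x := h ▸ R.mem_family.2 (.inl rfl)
  rcases R.mem_family.1 hxy with hx | hx | hx
  · exact .inl hx
  · exact .inr hx
  · obtain rfl | hy := eq_or_ne y R.root
    · exact .inl (hx.trans R.parent_root)
    · have hlt := R.depth_parent hy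
      rw [← hx] at hlt
      exact absurd (R.depth_le_of_mem_family hyx) hlt.not_ge

theorem family_ne_family_root (hx : x ≠ R.root) : R.family x ≠ R.family R.root := by
  intro h
  rcases R.eq_or_eq_sibling_of_family_eq h with h | h
  exacts [hx h, hx (h.trans R.sibling_root)]

theorem family_mem_insert_triangles (x : W) :
    R.family x ∈ insert {R.root} {T : Finset W | H.IsTriangle T} := by
  obtain rfl | hx := eq_or_ne x R.root
  exacts [.inl R.family_root, .inr (R.isTriangle_family hx)]

/-- Picks one member of each pair of siblings, by an arbitrary well-order. -/
def IsElder (x : W) : Prop :=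
  WellOrderingRel x (R.sibling x)

theorem isElder_sibling_iff (hx : x ≠ R.root) : R.IsElder (R.sibling x) ↔ ¬ R.IsElder x := by
  rw [IsElder, IsElder, R.sibling_sibling]
  refine ⟨fun h h' ↦ asymm h h', fun h ↦ ?_⟩
  exact ((trichotomous_of WellOrderingRel x (R.sibling x)).resolve_left h).resolve_left
    (R.adj_sibling hx).ne

/-- The colors of the rainbow walk joining edges that hang at `x` and `y`. -/
def palette (x y : W) : Set (Finset W) :=
  R.family '' {w | w = x ∨ w = y ∨ R.depth w < max (R.depth x) (R.depth y)}

theorem palette_comm (x y : W) : R.palette x y = R.palette y x := by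
  rw [palette, palette, max_comm]
  congr 1
  ext w
  exact or_left_comm

theorem family_mem_palette (x y : W) : R.family x ∈ R.palette x y :=
  ⟨x, .inl rfl, rfl⟩

theorem family_root_mem_palette (x y : W) : R.family R.root ∈ R.palette x y := by
  obtain rfl | hx := eq_or_ne x R.root
  · exact R.family_mem_palette _ y
  · have := R.depth_parent hx
    exact ⟨R.root, .inr (.inr (lt_max_of_lt_left (by rw [R.depth_root]; omega))), rfl⟩

theorem family_notMem_palette_parent (hx : x ≠ R.root) (hle : R.depth y ≤ R.depth x)
    (hyx : y ≠ x) (hys : y ≠ R.sibling x) : R.family x ∉ R.palette (R.parent x) y := by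
  rintro ⟨w, hw, hfam⟩
  have hwx := R.eq_or_eq_sibling_of_family_eq hfam
  have hdepth : R.depth w = R.depth x := by
    rcases hwx with rfl | rfl
    exacts [rfl, R.depth_sibling x]
  have hlt := R.depth_parent hx
  rcases hw with rfl | rfl | hw
  · exact hlt.ne hdepth
  · exact hwx.elim hyx hys
  · rw [hdepth] at hw
    exact hw.not_ge (max_le hlt.le hle)

theorem insert_family_palette_parent_subset (hx : x ≠ R.root) :
    insert (R.family x) (R.palette (R.parent x) y) ⊆ R.palette x y := by
  have hlt := R.depth_parent hx
  rw [Set.insert_subset_iff]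
  refine ⟨R.family_mem_palette x y, Set.image_mono ?_⟩
  rintro w (rfl | rfl | hw)
  · exact .inr (.inr (lt_max_of_lt_left hlt))
  · exact .inr (.inl rfl)
  · exact .inr (.inr (hw.trans_le (max_le_max_right _ hlt.le)))

end Family

section Coloring

variable {V W : Type*} {G : SimpleGraph V} {H : SimpleGraph W} (R : TriangleRooting H)
  (f : Copy H G) {e e' : G.edgeSet} {x y : W} {S : Set (Finset W)}

/-- The edge `e` contains the vertex `x` of the copy of `H` without being its parent edge. -/
def Hangs (x : W) (e : Sym2 V) : Prop :=
  f x ∈ e ∧ e ≠ s(f x, f (R.parent x))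

/-- The edge of `G` joining `x` to its parent. -/
def parentEdge (hx : x ≠ R.root) : G.edgeSet :=
  ⟨s(f x, f (R.parent x)), f.toHom.map_adj (R.adj_parent hx)⟩

/-- The edge of `G` joining `x` to its sibling. -/
def siblingEdge (hx : x ≠ R.root) : G.edgeSet :=
  ⟨s(f x, f (R.sibling x)), f.toHom.map_adj (R.adj_sibling hx)⟩

theorem hangs_parent_parentEdge (hx : x ≠ R.root) :
    R.Hangs f (R.parent x) (R.parentEdge f hx : Sym2 V) := by
  refine ⟨Sym2.mem_mk_right _ _, fun h ↦ ?_⟩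
  have hback : x = R.parent (R.parent x) := f.injective (Sym2.congr_right.1 (Sym2.eq_swap.trans h))
  have hlt := R.depth_parent hx
  have hle := R.depth_parent_le (R.parent x)
  rw [← hback] at hle
  exact hle.not_gt hlt

theorem hangs_siblingEdge (hx : x ≠ R.root) : R.Hangs f x (R.siblingEdge f hx : Sym2 V) := by
  refine ⟨Sym2.mem_mk_left _ _, fun h ↦ ?_⟩
  have hlt := R.depth_parent hx
  rw [← f.injective (Sym2.congr_right.1 h), R.depth_sibling] at hlt
  exact hlt.false

theorem exists_hangs (hcover : G.IsVertexCover (Set.range f)) (e : G.edgeSet) :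
    ∃ x, R.Hangs f x (e : Sym2 V) := by
  obtain ⟨x, hx⟩ : ∃ x, f x ∈ (e : Sym2 V) := by
    obtain ⟨⟨u, v⟩, huv⟩ := e
    rcases hcover huv with ⟨x, rfl⟩ | ⟨x, rfl⟩
    exacts [⟨x, Sym2.mem_mk_left _ _⟩, ⟨x, Sym2.mem_mk_right _ _⟩]
  by_cases he : (e : Sym2 V) = s(f x, f (R.parent x))
  · have hxr : x ≠ R.root := by
      rintro rfl
      have hadj : G.Adj (f R.root) (f (R.parent R.root)) := G.mem_edgeSet.1 (he ▸ e.2)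
      rw [R.parent_root] at hadj
      exact hadj.ne rfl
    exact ⟨R.parent x, he ▸ R.hangs_parent_parentEdge f hxr⟩
  · exact ⟨x, hx, he⟩

open Classical in
/-- Two edges that meet at `x` get the family of `x` as their color, unless `x` is an elder sibling
and both edges hang at `x`, in which case they get the extra color, the family of the root. -/
noncomputable def coloring (z : Sym2 G.edgeSet) : Finset W :=
  haveI : Nonempty W := ⟨R.root⟩
  let x := commonVertex f z
  if R.IsElder x ∧ ∀ e ∈ z, R.Hangs f x (e : Sym2 V) then R.family R.root else R.family x

theorem coloring_mem_insert_triangles (z : Sym2 G.edgeSet) :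
    R.coloring f z ∈ insert {R.root} {T : Finset W | H.IsTriangle T} := by
  rw [coloring]
  split_ifs <;> exact R.family_mem_insert_triangles _

open Classical in
theorem coloring_mk (hne : e ≠ e') (he : f x ∈ (e : Sym2 V)) (he' : f x ∈ (e' : Sym2 V)) :
    R.coloring f s(e, e') =
      if R.IsElder x ∧ R.Hangs f x (e : Sym2 V) ∧ R.Hangs f x (e' : Sym2 V)
      then R.family R.root else R.family x := by
  have : Nonempty W := ⟨R.root⟩
  have hcommon : commonVertex f s(e, e') = x := commonVertex_mk f.injective hne he he'
  simp only [coloring, hcommon, Sym2.ball]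

theorem coloring_mk_of_isElder (hne : e ≠ e') (hx : R.IsElder x)
    (he : R.Hangs f x (e : Sym2 V)) (he' : R.Hangs f x (e' : Sym2 V)) :
    R.coloring f s(e, e') = R.family R.root := by
  rw [R.coloring_mk f hne he.1 he'.1, if_pos ⟨hx, he, he'⟩]

theorem coloring_mk_of_not_isElder (hne : e ≠ e') (hx : ¬ R.IsElder x)
    (he : f x ∈ (e : Sym2 V)) (he' : f x ∈ (e' : Sym2 V)) :
    R.coloring f s(e, e') = R.family x := by
  rw [R.coloring_mk f hne he he', if_neg fun h ↦ hx h.1]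

theorem Hangs.ne_parentEdge {R : TriangleRooting H} {f : Copy H G} (hx : x ≠ R.root)
    (he : R.Hangs f x (e : Sym2 V)) : e ≠ R.parentEdge f hx :=
  fun h ↦ he.2 (congrArg Subtype.val h)

theorem coloring_mk_parentEdge (hx : x ≠ R.root) (he : R.Hangs f x (e : Sym2 V)) :
    R.coloring f s(e, R.parentEdge f hx) = R.family x := by
  rw [R.coloring_mk f (he.ne_parentEdge hx) he.1 (Sym2.mem_mk_left _ _),
    if_neg fun h ↦ h.2.2.2 rfl]

theorem rainbowReachable_of_mem (he : f x ∈ (e : Sym2 V)) (he' : f x ∈ (e' : Sym2 V))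
    (hroot : R.family R.root ∈ S) (hx : R.family x ∈ S) :
    RainbowReachable G.lineGraph (R.coloring f) S e e' := by
  classical
  obtain rfl | hne := eq_or_ne e e'
  · exact .refl _ _ _ _
  · refine .of_adj (lineGraph_adj_iff_exists.2 ⟨hne, f x, he, he'⟩) ?_
    rw [R.coloring_mk f hne he he']
    split_ifs
    exacts [hroot, hx]

-- The walk crosses the sibling edge; its two colors differ because exactly one sibling is elder.
theorem rainbowReachable_of_hangs_sibling (hx : x ≠ R.root) (hroot : R.family R.root ∈ S)
    (hxS : R.family x ∈ S) (he : R.Hangs f x (e : Sym2 V))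
    (he' : R.Hangs f (R.sibling x) (e' : Sym2 V)) :
    RainbowReachable G.lineGraph (R.coloring f) S e e' := by
  wlog helder : R.IsElder x generalizing x e e'
  · refine (this (R.sibling_ne_root hx) ?_ he' ?_ ((R.isElder_sibling_iff hx).2 helder)).symm
    · rwa [R.family_sibling]
    · rwa [R.sibling_sibling]
  have hyounger : ¬ R.IsElder (R.sibling x) := fun h ↦ (R.isElder_sibling_iff hx).1 h helder
  set g := R.siblingEdge f hx
  have hxg : f x ∈ (g : Sym2 V) := Sym2.mem_mk_left _ _
  have hsg : f (R.sibling x) ∈ (g : Sym2 V) := Sym2.mem_mk_right _ _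
  obtain rfl | heg := eq_or_ne e g
  · exact R.rainbowReachable_of_mem f hsg he'.1 hroot (R.family_sibling x ▸ hxS)
  obtain rfl | hge' := eq_or_ne g e'
  · exact R.rainbowReachable_of_mem f he.1 hxg hroot hxS
  have hcolor : R.coloring f s(e, g) = R.family R.root :=
    R.coloring_mk_of_isElder f heg helder he (R.hangs_siblingEdge f hx)
  have hcolor' : R.coloring f s(g, e') = R.family x := by
    rw [R.coloring_mk_of_not_isElder f hge' hyounger hsg he'.1, R.family_sibling]
  have hreach : RainbowReachable G.lineGraph (R.coloring f) {R.family x} g e' :=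
    .of_adj (lineGraph_adj_iff_exists.2 ⟨hge', _, hsg, he'.1⟩) hcolor'
  refine (hreach.cons (lineGraph_adj_iff_exists.2 ⟨heg, f x, he.1, hxg⟩) ?_).mono ?_
  · rw [hcolor]
    exact (R.family_ne_family_root hx).symm
  · rw [hcolor]
    exact Set.insert_subset hroot (Set.singleton_subset_iff.2 hxS)

theorem rainbowReachable_of_hangs (he : R.Hangs f x (e : Sym2 V))
    (he' : R.Hangs f y (e' : Sym2 V)) :
    RainbowReachable G.lineGraph (R.coloring f) (R.palette x y) e e' := by
  induction hn : R.depth x + R.depth y using Nat.strong_induction_on generalizing x y e e' with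
  | _ n ih =>
  wlog hle : R.depth y ≤ R.depth x generalizing x y e e'
  · rw [palette_comm]
    exact (this he' he (by omega) (by omega)).symm
  have hroot := R.family_root_mem_palette x y
  have hxS := R.family_mem_palette x y
  obtain rfl | hyx := eq_or_ne y x
  · exact R.rainbowReachable_of_mem f he.1 he'.1 hroot hxS
  have hx : x ≠ R.root := by
    rintro rfl
    have hlt := R.depth_parent hyx
    rw [R.depth_root] at hle
    omega
  obtain rfl | hys := eq_or_ne y (R.sibling x)
  · exact R.rainbowReachable_of_hangs_sibling f hx hroot hxS he he'
  have hlt := R.depth_parent hx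
  have hreach := ih _ (by omega) (R.hangs_parent_parentEdge f hx) he' rfl
  have hadj : G.lineGraph.Adj e (R.parentEdge f hx) :=
    lineGraph_adj_iff_exists.2 ⟨he.ne_parentEdge hx, f x, he.1, Sym2.mem_mk_left _ _⟩
  have hcolor := R.coloring_mk_parentEdge f hx he
  have hnew := R.family_notMem_palette_parent hx hle hyx hys
  rw [← hcolor] at hnew
  refine (hreach.cons hadj hnew).mono ?_
  rw [hcolor]
  exact R.insert_family_palette_parent_subset hx

theorem rainbowConnected_coloring (hcover : G.IsVertexCover (Set.range f)) :
    G.lineGraph.RainbowConnected (R.coloring f) := by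
  intro e e'
  obtain ⟨x, hx⟩ := R.exists_hangs f hcover e
  obtain ⟨y, hy⟩ := R.exists_hangs f hcover e'
  exact (R.rainbowReachable_of_hangs f hx hy).exists_isPath

end Coloring

end TriangleRooting

theorem rc_lineGraph_triangleTree_pendant_general {V W : Type*} {G : SimpleGraph V}
    {H : SimpleGraph W} (f : Copy H G) (hcover : G.IsVertexCover (Set.range f))
    (hconn : H.Connected) (hH : H.IsTriangleForest)
    (hfin : {T : Finset W | H.IsTriangle T}.Finite) :
    G.lineGraph.rc ≤ {T : Finset W | H.IsTriangle T}.ncard + 1 := by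
  obtain ⟨R⟩ := nonempty_triangleRooting hconn hH
  calc G.lineGraph.rc
      ≤ (insert {R.root} {T : Finset W | H.IsTriangle T}).ncard :=
        rc_le_ncard_of_rainbowConnected (hfin.insert _)
          (fun z _ ↦ R.coloring_mem_insert_triangles f z) (R.rainbowConnected_coloring f hcover)
    _ ≤ {T : Finset W | H.IsTriangle T}.ncard + 1 := Set.ncard_insert_le _ _

/-- Let `H` be a triangle-tree-structure (a connected graph each of whose blocks is a
triangle) with exactly `t` triangles, and let the connected graph `G` be obtained from `H`
by attaching pendant edges: `G` consists of `H` (the subgraph induced on the complement of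
the set `P` of new vertices) together with the vertices of `P`, each of degree one and
adjacent to a vertex of `H`. Then `rc (L(G)) ≤ t + 1`. -/
theorem rc_lineGraph_triangleTree_pendant {V : Type*} [Fintype V] [DecidableEq V]
    (G : SimpleGraph V) [DecidableRel G.Adj] (hG : G.Connected) (P : Set V)
    (hpend : ∀ p ∈ P, G.degree p = 1)
    (hattach : ∀ p ∈ P, ∀ q, G.Adj p q → q ∉ P)
    (hHconn : (G.induce Pᶜ).Connected)
    (hHforest : (G.induce Pᶜ).IsTriangleForest)
    (t : ℕ) (ht : {T : Finset ↥Pᶜ | (G.induce Pᶜ).IsTriangle T}.ncard = t) :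
    G.lineGraph.rc ≤ t + 1 := by
  have hcover : G.IsVertexCover (Set.range (Copy.induce G Pᶜ)) := fun u v huv ↦ by
    simpa [Copy.induce, or_iff_not_imp_left] using fun hu ↦ hattach u hu v huv
  exact ht ▸ rc_lineGraph_triangleTree_pendant_general _ hcover hHconn hHforest (Set.toFinite _)
end

section
/- If G is a connected cubic graph (every vertex has degree 3) with n vertices, then the iterated line graph L²(G) = L(L(G)) satisfies rc(L²(G)) ≤ n + 1. -/
open SimpleGraph

/-!
Let `S` be a set of vertices of a graph `H` such that `H[S]` is connected and every edge of `H`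
lies in the closed neighborhood of some vertex of `S`. Color an edge of `L(H)` by the vertex
shared by its two ends if that vertex is in `S`. A path of `H[S]` from `d` to `e` then yields a
rainbow walk of `L(H)` between any edge at `d` and any edge at `e`, with one color per vertex of
the path. An edge `x` of `H` that avoids `S` spans a triangle with some `d ∈ S`; each endpoint `a`
of `x` gives a step of `L(H)` from `x` to `s(a, d)`, and these two steps receive two extra colors,
so that one extra color can be used for leaving the source and the other for reaching the target.
Hence `rc (L(H)) ≤ |S| + 2`.

For `H = L(G)`, the `n - 1` edges of a spanning tree of `G` form such a set `S`.
-/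

section RainbowConnection

variable {V α : Type*} {G : SimpleGraph V} {c : Sym2 V → α}

lemma rainbowConnected_of_forall_exists_walk
    (h : ∀ u v : V, ∃ p : G.Walk u v, (p.edges.map c).Nodup) : G.RainbowConnected c := by
  classical
  intro u v
  obtain ⟨p, hp⟩ := h u v
  exact ⟨p.bypass, p.bypass_isPath, hp.sublist (p.edges_bypass_sublist_edges.map c)⟩

lemma rc_le_card_of_rainbowConnected [Finite α] (h : G.RainbowConnected c) :
    G.rc ≤ Nat.card α := by
  let φ : α ≃ Fin (Nat.card α) := Finite.equivFin α
  refine Nat.sInf_le ⟨fun e ↦ φ (c e), fun e _ ↦ (φ (c e)).isLt, fun u v ↦ ?_⟩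
  obtain ⟨p, hp, hc⟩ := h u v
  refine ⟨p, hp, ?_⟩
  simpa only [List.map_map, Function.comp_def] using hc.map (Fin.val_injective.comp φ.injective)

end RainbowConnection

section LineGraph

variable {V : Type*} {G : SimpleGraph V}

lemma lineGraph_adj_of_mem_of_mem {e f : G.edgeSet} {v : V} (hne : e ≠ f) (he : v ∈ e.1)
    (hf : v ∈ f.1) : G.lineGraph.Adj e f :=
  lineGraph_adj_iff_exists.mpr ⟨hne, v, he, hf⟩

lemma lineGraph_reachable_of_mem_of_mem {e f : G.edgeSet} {v : V} (he : v ∈ e.1) (hf : v ∈ f.1) :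
    G.lineGraph.Reachable e f := by
  obtain rfl | hne := eq_or_ne e f
  · rfl
  · exact (lineGraph_adj_of_mem_of_mem hne he hf).reachable

lemma lineGraph_reachable_of_walk {u v : V} (p : G.Walk u v) {e f : G.edgeSet} (he : u ∈ e.1)
    (hf : v ∈ f.1) : G.lineGraph.Reachable e f := by
  induction p generalizing e with
  | nil => exact lineGraph_reachable_of_mem_of_mem he hf
  | @cons u w _ h _ ih =>
    let g : G.edgeSet := ⟨s(u, w), h⟩
    have hug : u ∈ g.1 := Sym2.mem_mk_left u w
    have hwg : w ∈ g.1 := Sym2.mem_mk_right u w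
    exact (lineGraph_reachable_of_mem_of_mem he hug).trans (ih hwg hf)

lemma preconnected_lineGraph (hG : G.Preconnected) : G.lineGraph.Preconnected := by
  intro e f
  obtain ⟨p⟩ := hG e.1.out.1 f.1.out.1
  exact lineGraph_reachable_of_walk p e.1.out_fst_mem f.1.out_fst_mem

lemma edge_out_fst_ne_out_snd (e : G.edgeSet) : e.1.out.1 ≠ e.1.out.2 := by
  have hout : s(e.1.out.1, e.1.out.2) = e.1 := e.1.out_eq
  have hadj : s(e.1.out.1, e.1.out.2) ∈ G.edgeSet := by
    rw [hout]
    exact e.2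
  exact G.ne_of_adj hadj

lemma exists_forall_mem_of_mem_edgeSet_lineGraph {x : Sym2 G.edgeSet}
    (hx : x ∈ G.lineGraph.edgeSet) : ∃ v, ∀ e ∈ x, v ∈ e.1 := by
  induction x with
  | _ e f =>
    obtain ⟨-, v, he, hf⟩ := lineGraph_adj_iff_exists.mp hx
    exact ⟨v, Sym2.forall_mem_pair.mpr ⟨he, hf⟩⟩

end LineGraph

section SharedVertexColoring

variable {W : Type*} {H : SimpleGraph W} {S : Set W}

/-- A set `S` of vertices dominates the edges of `H` if both ends of each edge lie in the closed
neighborhood of one vertex of `S`, that is, each edge contains a vertex of `S` or forms a triangle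
with one. -/
def DominatesEdges (H : SimpleGraph W) (S : Set W) : Prop :=
  ∀ x ∈ H.edgeSet, ∃ d ∈ S, ∀ a ∈ x, a ≠ d → H.Adj a d

open Classical in
/-- The coloring of the edges of `L(H)` by the shared vertex when it lies in `S`. The two extra
colors tell apart the two ends of an edge `x` of `H` avoiding `S`: a step from `x` to an edge
meeting `S` has color `true` exactly when it goes through the end `x.out.1`. -/
noncomputable def sharedVertexColoring (S : Set W) (s : Sym2 H.edgeSet) : S ⊕ Bool :=
  if h : ∃ a : S, ∀ x ∈ s, a.1 ∈ x.1 then .inl h.choose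
  else .inr (decide (∃ x ∈ s, (∀ a ∈ x.1, a ∉ S) ∧ ∀ y ∈ s, x.1.out.1 ∈ y.1))

lemma eq_of_mem_edges_of_ne {x y : H.edgeSet} (hxy : x ≠ y) {a b : W} (hax : a ∈ x.1)
    (hay : a ∈ y.1) (hbx : b ∈ x.1) (hby : b ∈ y.1) : a = b :=
  of_not_not fun hab ↦ hxy (Subtype.ext (Sym2.eq_of_ne_mem hab hax hbx hay hby))

lemma sharedVertexColoring_eq_inl {x y : H.edgeSet} (hxy : x ≠ y) {a : S} (hx : a.1 ∈ x.1)
    (hy : a.1 ∈ y.1) : sharedVertexColoring S s(x, y) = .inl a := by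
  have h : ∃ a : S, ∀ z ∈ s(x, y), a.1 ∈ z.1 := ⟨a, Sym2.forall_mem_pair.mpr ⟨hx, hy⟩⟩
  obtain ⟨hx', hy'⟩ := Sym2.forall_mem_pair.mp h.choose_spec
  rw [sharedVertexColoring, dif_pos h]
  exact congrArg Sum.inl (Subtype.ext (eq_of_mem_edges_of_ne hxy hx' hy' hx hy))

lemma sharedVertexColoring_eq_inr {x y : H.edgeSet} (hxS : ∀ a ∈ x.1, a ∉ S) {d : W} (hd : d ∈ S)
    (hdy : d ∈ y.1) {a : W} (hax : a ∈ x.1) (hay : a ∈ y.1) {b : Bool}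
    (hb : b = true ↔ x.1.out.1 = a) : sharedVertexColoring S s(x, y) = .inr b := by
  classical
  have hxy : x ≠ y := by
    rintro rfl
    exact hxS d hdy hd
  have h : ¬∃ a : S, ∀ z ∈ s(x, y), a.1 ∈ z.1 := fun ⟨e, he⟩ ↦
    hxS e (he x (Sym2.mem_mk_left x y)) e.2
  rw [sharedVertexColoring, dif_neg h, Sum.inr.injEq, Bool.eq_iff_iff, decide_eq_true_iff, hb]
  constructor
  · rintro ⟨z, hz, hzS, hout⟩
    obtain rfl | rfl := Sym2.mem_iff.mp hz
    · obtain ⟨hzx, hzy⟩ := Sym2.forall_mem_pair.mp hout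
      exact eq_of_mem_edges_of_ne hxy hzx hzy hax hay
    · exact absurd hd (hzS d hdy)
  · rintro rfl
    exact ⟨x, Sym2.mem_mk_left x y, hxS, Sym2.forall_mem_pair.mpr ⟨hax, hay⟩⟩

lemma exists_mem_out_fst_eq_iff (x : H.edgeSet) (b : Bool) :
    ∃ a ∈ x.1, (b = true ↔ x.1.out.1 = a) := by
  cases b with
  | true => exact ⟨x.1.out.1, x.1.out_fst_mem, by simp⟩
  | false => exact ⟨x.1.out.2, x.1.out_snd_mem, by simpa using edge_out_fst_ne_out_snd x⟩

lemma exists_lineGraph_walk_sublist_singleton {α : Type*} {c : Sym2 H.edgeSet → α} {k : α}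
    {x y : H.edgeSet} {a : W} (hx : a ∈ x.1) (hy : a ∈ y.1) (hk : x ≠ y → c s(x, y) = k) :
    ∃ r : H.lineGraph.Walk x y, (r.edges.map c).Sublist [k] := by
  obtain rfl | hne := eq_or_ne x y
  · exact ⟨.nil, List.nil_sublist _⟩
  · exact ⟨(lineGraph_adj_of_mem_of_mem hne hx hy).toWalk, by simp [hk hne]⟩

lemma exists_lineGraph_walk_sublist_support {d e : S} (q : (H.induce S).Walk d e)
    {x y : H.edgeSet} (hx : d.1 ∈ x.1) (hy : e.1 ∈ y.1) :
    ∃ r : H.lineGraph.Walk x y,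
      (r.edges.map (sharedVertexColoring S)).Sublist (q.support.map .inl) := by
  induction q generalizing x with
  | nil =>
    exact exists_lineGraph_walk_sublist_singleton hx hy
      fun hxy ↦ sharedVertexColoring_eq_inl hxy hx hy
  | @cons d f e hadj q ih =>
    let z : H.edgeSet := ⟨s(d.1, f.1), hadj⟩
    have hdz : d.1 ∈ z.1 := Sym2.mem_mk_left _ _
    obtain ⟨r₁, hr₁⟩ := exists_lineGraph_walk_sublist_singleton hx hdz
      fun hxz ↦ sharedVertexColoring_eq_inl hxz hx hdz
    obtain ⟨r₂, hr₂⟩ := ih (x := z) (Sym2.mem_mk_right _ _) hy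
    refine ⟨r₁.append r₂, ?_⟩
    simpa only [Walk.edges_append, List.map_append, Walk.support_cons, List.map_cons,
      List.singleton_append] using hr₁.append hr₂

lemma DominatesEdges.exists_lineGraph_walk_sublist_inr (hS : DominatesEdges H S) (x : H.edgeSet)
    (b : Bool) :
    ∃ (d : S) (z : H.edgeSet) (r : H.lineGraph.Walk x z),
      d.1 ∈ z.1 ∧ (r.edges.map (sharedVertexColoring S)).Sublist [.inr b] := by
  by_cases hxS : ∀ a ∈ x.1, a ∉ S
  · obtain ⟨d, hd, hadj⟩ := hS x.1 x.2
    obtain ⟨a, hax, hab⟩ := exists_mem_out_fst_eq_iff x b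
    let z : H.edgeSet := ⟨s(a, d), hadj a hax fun had ↦ hxS a hax (had ▸ hd)⟩
    have haz : a ∈ z.1 := Sym2.mem_mk_left a d
    have hdz : d ∈ z.1 := Sym2.mem_mk_right a d
    obtain ⟨r, hr⟩ := exists_lineGraph_walk_sublist_singleton hax haz
      fun _ ↦ sharedVertexColoring_eq_inr hxS hd hdz hax haz hab
    exact ⟨⟨d, hd⟩, z, r, hdz, hr⟩
  · push Not at hxS
    obtain ⟨d, hdx, hd⟩ := hxS
    exact ⟨⟨d, hd⟩, x, .nil, hdx, List.nil_sublist _⟩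

lemma DominatesEdges.rainbowConnected_sharedVertexColoring (hS : DominatesEdges H S)
    (hconn : (H.induce S).Preconnected) :
    H.lineGraph.RainbowConnected (sharedVertexColoring S) := by
  refine rainbowConnected_of_forall_exists_walk fun x y ↦ ?_
  obtain ⟨d, x', r₁, hdx', hr₁⟩ := hS.exists_lineGraph_walk_sublist_inr x true
  obtain ⟨e, y', r₃, hey', hr₃⟩ := hS.exists_lineGraph_walk_sublist_inr y false
  obtain ⟨q, hq⟩ := hconn.exists_isPath d e
  obtain ⟨r₂, hr₂⟩ := exists_lineGraph_walk_sublist_support q hdx' hey'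
  have hnodup : ([.inr true] ++ q.support.map .inl ++ [.inr false] : List (S ⊕ Bool)).Nodup := by
    simp [List.nodup_append, hq.support_nodup.map Sum.inl_injective]
  refine ⟨(r₁.append r₂).append r₃.reverse, hnodup.sublist ?_⟩
  simpa only [Walk.edges_append, Walk.edges_reverse, List.map_append, List.map_reverse,
    List.reverse_singleton] using (hr₁.append hr₂).append hr₃.reverse

theorem DominatesEdges.rc_lineGraph_le [Finite S] (hS : DominatesEdges H S)
    (hconn : (H.induce S).Preconnected) : H.lineGraph.rc ≤ Nat.card S + 2 := by
  simpa only [Nat.card_sum, Nat.card_eq_fintype_card (α := Bool), Fintype.card_bool] using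
    rc_le_card_of_rainbowConnected (hS.rainbowConnected_sharedVertexColoring hconn)

end SharedVertexColoring

lemma dominatesEdges_lineGraph_of_preconnected {V : Type*} {G T : SimpleGraph V} (hTG : T ≤ G)
    (hT : T.Preconnected) :
    DominatesEdges G.lineGraph (Set.range (Copy.ofLE T G hTG).toLineGraphEmbedding) := by
  intro x hx
  obtain ⟨v, hv⟩ := exists_forall_mem_of_mem_edgeSet_lineGraph hx
  have : Nontrivial V := ⟨_, _, edge_out_fst_ne_out_snd x.out.1⟩
  obtain ⟨w, hvw⟩ := hT.exists_adj_of_nontrivial v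
  refine ⟨⟨s(v, w), hTG hvw⟩, ⟨⟨s(v, w), hvw⟩, rfl⟩, fun e he hne ↦ ?_⟩
  exact lineGraph_adj_of_mem_of_mem hne (hv e he) (Sym2.mem_mk_left v w)

theorem rc_iteratedLineGraph_cubic_general {V : Type*} [Fintype V] (G : SimpleGraph V)
    (hG : G.Connected) : G.lineGraph.lineGraph.rc ≤ Fintype.card V + 1 := by
  obtain ⟨T, hTG, hT⟩ := hG.exists_isTree_le
  let φ : T.lineGraph ↪g G.lineGraph := (Copy.ofLE T G hTG).toLineGraphEmbedding
  have hconn : (G.lineGraph.induce (Set.range φ)).Preconnected :=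
    (preconnected_lineGraph hT.connected.preconnected).map φ.isoInduceRange.toHom
      φ.isoInduceRange.surjective
  have hcard : Nat.card (Set.range φ) + 1 = Fintype.card V := by
    rw [Nat.card_range_of_injective φ.injective, ← Nat.card_eq_fintype_card]
    exact (isTree_iff_connected_and_card.mp hT).2
  calc G.lineGraph.lineGraph.rc
      ≤ Nat.card (Set.range φ) + 2 :=
        (dominatesEdges_lineGraph_of_preconnected hTG hT.connected.preconnected).rc_lineGraph_le
          hconn
    _ = Fintype.card V + 1 := by rw [← hcard]

/-- If `G` is a connected cubic graph (every vertex has degree 3) with `n` vertices, then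
the iterated line graph satisfies `rc (L²(G)) ≤ n + 1`. -/
theorem rc_iteratedLineGraph_cubic {V : Type*} [Fintype V] (G : SimpleGraph V)
    [DecidableRel G.Adj] (hG : G.Connected) (hcubic : ∀ v : V, G.degree v = 3) :
    G.lineGraph.lineGraph.rc ≤ Fintype.card V + 1 :=
  rc_iteratedLineGraph_cubic_general G hG
end
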